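/- A category C has a left calculus of fractions (with respect to itself) if and only if for every n ≥ 1 and every 0 ≤ k ≤ n, every functor Λ(n,k) → C extends along the inclusion to a functor P₊(n) → C. (Equivalently: Ex N C is a Kan complex if and only if C admits a left calculus of fractions.) -/

import Mathlib

/-!
Suppose `C` has a left calculus of fractions. A functor `F` on the horn extends to the simplex as
soon as it has a cocone, since the two missing elements form an upper set and can both be sent to
the apex (`exists_extension_of_cocone`). The horn carries the monotone closure operator
`S ↦ S ∪ {k}`, whose image has the least element `{k}`; it therefore suffices to find a cocone on a
finite diagram with a least element. (CF1) yields maps to a common object which agree on the value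
at the least element, and then finitely many uses of (CF2) make them compatible
(`HasLCF.exists_cocone`).

Conversely, the horn `Λ(2,0)` contains the span `{0,1} ⊇ {0} ⊆ {0,2}`, whose extension to the
simplex is (CF1). For (CF2), the link of `{3}` in `Λ(3,3)` is the hexagon
`{0,3} ⊆ {0,1,3} ⊇ {1,3} ⊆ {1,2,3} ⊇ {2,3} ⊆ {0,2,3} ⊇ {0,3}`. Labelling its first two inclusions
by `f` and `g`, and the remaining four by identities, an extension yields a map coequalizing
`f` and `g`; the other elements of the horn are sent to the source of `s`.
-/

open CategoryTheory

/-- `PPlus n` is the poset of nonempty subsets of `{0, …, n}`, ordered by inclusion;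
this is `c Sd Δ[n]`. -/
abbrev PPlus (n : ℕ) := {s : Finset (Fin (n+1)) // s.Nonempty}

/-- `Lam n k` is the full subposet of `PPlus n` obtained by removing the two elements
`{0, …, n}` and `{0, …, n} \ {k}`; this is `c Sd Λ^k[n]`. -/
abbrev Lam (n : ℕ) (k : Fin (n+1)) :=
  {x : PPlus n // x.1 ≠ Finset.univ ∧ x.1 ≠ Finset.univ \ {k}}

/-- The inclusion of the horn `Lam n k` into `PPlus n`. -/
def lamIncl (n : ℕ) (k : Fin (n+1)) : Lam n k ⥤ PPlus n :=
  Monotone.functor (f := fun x => x.1) (fun _ _ h => h)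

/-- A category has a left calculus of fractions (with respect to itself) if it satisfies
(CF1) and (CF2). -/
def HasLCF (C : Type*) [Category C] : Prop :=
  (∀ ⦃X Y Z : C⦄ (s : X ⟶ Y) (t : X ⟶ Z),
      ∃ (W : C) (u : Y ⟶ W) (v : Z ⟶ W), s ≫ u = t ≫ v) ∧
  (∀ ⦃X' X Y : C⦄ (f g : X ⟶ Y) (s : X' ⟶ X), s ≫ f = s ≫ g →
      ∃ (Y' : C) (t : Y ⟶ Y'), f ≫ t = g ≫ t)

universe u v w

/-! ### Cocones on finite diagrams -/

/-- Finitely many morphisms out of one object can be completed to a common composite. -/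
lemma HasLCF.exists_wide {C : Type u} [Category.{v} C] (hC : HasLCF C) {ι : Type w} (S : Finset ι)
    {X : C} (Y : ι → C) (t : ∀ i, X ⟶ Y i) :
    ∃ (W : C) (p : X ⟶ W), ∀ i ∈ S, ∃ f : Y i ⟶ W, t i ≫ f = p := by
  classical
  induction S using Finset.induction_on with
  | empty => exact ⟨X, 𝟙 X, by simp⟩
  | insert a S _ ih =>
    obtain ⟨W, p, h⟩ := ih
    obtain ⟨V, a₁, a₂, e⟩ := hC.1 p (t a)
    refine ⟨V, p ≫ a₁, fun i hi => ?_⟩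
    rcases Finset.mem_insert.1 hi with rfl | hi
    · exact ⟨a₂, e.symm⟩
    · obtain ⟨f, hf⟩ := h i hi
      exact ⟨f ≫ a₁, by rw [← Category.assoc, hf]⟩

/-- Finitely many parallel pairs with a common target, each equalized by some morphism, are
coequalized by a single morphism. -/
lemma HasLCF.exists_coeq {C : Type u} [Category.{v} C] (hC : HasLCF C) {ι : Type w} (S : Finset ι)
    {W A : C} (Y : ι → C) (s : ∀ i, A ⟶ Y i) (f g : ∀ i, Y i ⟶ W)
    (h : ∀ i, s i ≫ f i = s i ≫ g i) :
    ∃ (V : C) (t : W ⟶ V), ∀ i ∈ S, f i ≫ t = g i ≫ t := by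
  classical
  induction S using Finset.induction_on with
  | empty => exact ⟨W, 𝟙 W, by simp⟩
  | insert a S _ ih =>
    obtain ⟨V, t, ht⟩ := ih
    obtain ⟨V', t', e⟩ := hC.2 (f a ≫ t) (g a ≫ t) (s a) (by
      rw [← Category.assoc, h, Category.assoc])
    refine ⟨V', t ≫ t', fun i hi => ?_⟩
    rcases Finset.mem_insert.1 hi with rfl | hi
    · simpa using e
    · rw [← Category.assoc, ht i hi, Category.assoc]

/-- A diagram on a finite preorder has a cocone if the preorder has an inflationary monotone
self-map `cl` whose image is bounded below by an element `b`. -/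
lemma HasLCF.exists_cocone {C : Type u} [Category.{v} C] (hC : HasLCF C) {P : Type w} [Preorder P]
    [Finite P] (F : P ⥤ C) (b : P) (cl : P → P) (hm : Monotone cl) (hle : ∀ x, x ≤ cl x)
    (hb : ∀ x, b ≤ cl x) :
    ∃ (W : C) (c : ∀ x, F.obj x ⟶ W), ∀ (x y : P) (h : x ⟶ y), F.map h ≫ c y = c x := by
  classical
  have := Fintype.ofFinite P
  obtain ⟨W, p, hp⟩ := hC.exists_wide (Finset.univ : Finset P) (fun x => F.obj (cl x))
    (fun x => F.map (homOfLE (hb x)))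
  choose f hf using fun x => hp x (Finset.mem_univ x)
  obtain ⟨V, t, ht⟩ := hC.exists_coeq (Finset.univ : Finset {q : P × P // q.1 ≤ q.2})
    (fun q => F.obj (cl q.1.1)) (fun q => F.map (homOfLE (hb q.1.1)))
    (fun q => F.map (homOfLE (hm q.2)) ≫ f q.1.2) (fun q => f q.1.1) (fun q => by
      rw [hf, ← Category.assoc, ← F.map_comp, homOfLE_comp, hf])
  refine ⟨V, fun x => F.map (homOfLE (hle x)) ≫ f x ≫ t, fun x y h => ?_⟩
  have : (F.map (homOfLE (hm (leOfHom h))) ≫ f y) ≫ t = f x ≫ t :=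
    ht ⟨(x, y), leOfHom h⟩ (Finset.mem_univ _)
  dsimp only
  rw [← this]
  simp only [← Category.assoc, ← F.map_comp]
  rfl

/-! ### Extension from a lower set -/

/-- A functor on a lower set of a preorder extends to the whole preorder if it has a cocone: all
other elements are sent to the apex. -/
lemma exists_extension_of_cocone {C : Type u} [Category.{v} C] {P : Type w} [Preorder P]
    (p : P → Prop) (hp : ∀ x y, x ≤ y → p y → p x) (F : {x // p x} ⥤ C)
    (W : C) (c : ∀ x, F.obj x ⟶ W) (hc : ∀ x y (h : x ⟶ y), F.map h ≫ c y = c x) :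
    ∃ G : P ⥤ C, Monotone.functor (f := fun x : {x // p x} => x.1) (fun _ _ h => h) ⋙ G = F := by
  classical
  let o : P → C := fun x => if h : p x then F.obj ⟨x, h⟩ else W
  have o1 : ∀ x (h : p x), o x = F.obj ⟨x, h⟩ := fun x h => dif_pos h
  have o2 : ∀ x (h : ¬ p x), o x = W := fun x h => dif_neg h
  let m : ∀ x y, x ≤ y → (o x ⟶ o y) := fun x y h =>
    if hy : p y then
      eqToHom (o1 x (hp x y h hy)) ≫
        F.map (X := ⟨x, hp x y h hy⟩) (Y := ⟨y, hy⟩) (homOfLE h) ≫ eqToHom (o1 y hy).symm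
    else if hx : p x then eqToHom (o1 x hx) ≫ c ⟨x, hx⟩ ≫ eqToHom (o2 y hy).symm
    else eqToHom ((o2 x hx).trans (o2 y hy).symm)
  refine ⟨{ obj := o, map := fun {x y} h => m x y (leOfHom h), map_id := ?_, map_comp := ?_ }, ?_⟩
  · intro x
    by_cases hx : p x
    · have : F.map (homOfLE le_rfl : (⟨x, hx⟩ : {x // p x}) ⟶ ⟨x, hx⟩) = 𝟙 _ := F.map_id _
      simp only [m, dif_pos hx, this]
      simp
    · simp [m, hx]
  · intro x y z f g
    have hxy := leOfHom f
    have hyz := leOfHom g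
    by_cases hz : p z
    · have hy := hp y z hyz hz
      have hx := hp x y hxy hy
      have : F.map (homOfLE (hxy.trans hyz) : (⟨x, hx⟩ : {x // p x}) ⟶ ⟨z, hz⟩) =
          F.map (homOfLE hxy : (⟨x, hx⟩ : {x // p x}) ⟶ ⟨y, hy⟩) ≫
          F.map (homOfLE hyz : (⟨y, hy⟩ : {x // p x}) ⟶ ⟨z, hz⟩) := by
        rw [← F.map_comp]; rfl
      simp only [m, dif_pos hz, dif_pos hy, this]
      simp
    · by_cases hy : p y
      · have hx := hp x y hxy hy
        have := hc ⟨x, hx⟩ ⟨y, hy⟩ (homOfLE hxy)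
        simp only [m, dif_pos hx, dif_pos hy, dif_neg hz, ← this]
        simp
      · by_cases hx : p x
        · simp [m, hx, hy, hz]
        · simp [m, hx, hy, hz]
  · refine CategoryTheory.Functor.ext (fun x => o1 x.1 x.2) (fun x y h => ?_)
    change m x.1 y.1 (leOfHom h) = _
    simp only [m, dif_pos y.2]
    rfl

/-- Horns extend: the cocone comes from the closure operator `S ↦ S ∪ {k}`, with `{k}` below its
image. -/
lemma lam_extension {C : Type u} [Category.{v} C] (hC : HasLCF C) (n : ℕ) (hn : 1 ≤ n)
    (k : Fin (n+1)) (F : Lam n k ⥤ C) : ∃ G : PPlus n ⥤ C, lamIncl n k ⋙ G = F := by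
  classical
  have hsd : ∀ s : Finset (Fin (n+1)), k ∈ s → s ≠ Finset.univ \ {k} := by
    rintro s hk rfl
    simp at hk
  have hins : ∀ x : Lam n k, insert k x.1.1 ≠ Finset.univ := by
    intro x hx
    by_cases hk : k ∈ x.1.1
    · exact x.2.1 (by rwa [Finset.insert_eq_of_mem hk] at hx)
    · apply x.2.2
      have := congrArg (Finset.erase · k) hx
      simpa only [Finset.erase_insert hk, ← Finset.sdiff_singleton_eq_erase] using this
  have hsing : ({k} : Finset (Fin (n+1))) ≠ Finset.univ := by
    intro h
    have := congrArg Finset.card h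
    simp at this
    omega
  obtain ⟨W, c, hc⟩ := hC.exists_cocone F
    ⟨⟨{k}, Finset.singleton_nonempty k⟩, hsing, hsd _ (Finset.mem_singleton_self k)⟩
    (fun x => ⟨⟨insert k x.1.1, Finset.insert_nonempty _ _⟩, hins x,
      hsd _ (Finset.mem_insert_self _ _)⟩)
    (fun x y h => Finset.insert_subset_insert k h)
    (fun x => Finset.subset_insert k x.1.1)
    (fun x => Finset.singleton_subset_iff.2 (Finset.mem_insert_self k x.1.1))
  refine exists_extension_of_cocone
    (fun x : PPlus n => x.1 ≠ Finset.univ ∧ x.1 ≠ Finset.univ \ {k}) ?_ F W c hc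
  intro x y h hy
  have h : x.1 ⊆ y.1 := h
  constructor
  · intro hx
    exact hy.1 (Finset.univ_subset_iff.1 (hx ▸ h))
  · intro hx
    rw [hx] at h
    by_cases hk : k ∈ y.1
    · apply hy.1
      ext i
      by_cases hi : i = k
      · simp [hi, hk]
      · simpa using h (by simp [hi])
    · refine hy.2 (Finset.Subset.antisymm (fun i hi => ?_) h)
      have : i ≠ k := by rintro rfl; exact hk hi
      simp [this]

/-! ### The horns giving the two axioms -/

/-- Three labels, ordered as `0 ≤ 1 ≤ 2`, for the values `X'`, `X`, `Y` of a diagram built from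
a pair `f g : X ⟶ Y` and a morphism `s : X' ⟶ X`. -/
def labelObj {C : Type u} (X' X Y : C) : Fin 3 → C
  | 0 => X'
  | 1 => X
  | 2 => Y

/-- The morphism between labelled objects; the Boolean selects `f` or `g` for `1 ≤ 2`. -/
def labelMap {C : Type u} [Category.{v} C] {X' X Y : C} (s : X' ⟶ X) (f g : X ⟶ Y) (β : Bool) :
    ∀ a b : Fin 3, a ≤ b → (labelObj X' X Y a ⟶ labelObj X' X Y b)
  | 0, 0, _ => 𝟙 X'
  | 0, 1, _ => s
  | 0, 2, _ => s ≫ f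
  | 1, 1, _ => 𝟙 X
  | 1, 2, _ => if β then f else g
  | 2, 2, _ => 𝟙 Y
  | 1, 0, h => absurd h (by decide)
  | 2, 0, h => absurd h (by decide)
  | 2, 1, h => absurd h (by decide)

lemma labelMap_id {C : Type u} [Category.{v} C] {X' X Y : C} (s : X' ⟶ X) (f g : X ⟶ Y)
    (β : Bool) (a : Fin 3) (h : a ≤ a) : labelMap s f g β a a h = 𝟙 _ := by
  fin_cases a <;> rfl

/-- Composition is respected provided a composite `1 ≤ 1 ≤ 2` selects the same morphism twice. -/
lemma labelMap_comp {C : Type u} [Category.{v} C] {X' X Y : C} (s : X' ⟶ X) (f g : X ⟶ Y)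
    (e : s ≫ f = s ≫ g) (β γ : Bool) (a b c : Fin 3) (h : a ≤ b) (h' : b ≤ c)
    (hβ : a = 1 → b = 1 → c = 2 → β = γ) :
    labelMap s f g β a c (h.trans h') = labelMap s f g β a b h ≫ labelMap s f g γ b c h' := by
  match a, b, c, h, h', hβ with
  | 0, 0, 0, _, _, _ => exact (Category.id_comp _).symm
  | 0, 0, 1, _, _, _ => exact (Category.id_comp _).symm
  | 0, 0, 2, _, _, _ => exact (Category.id_comp _).symm
  | 0, 1, 1, _, _, _ => exact (Category.comp_id _).symm
  | 0, 1, 2, _, _, _ => cases γ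
                        · exact e
                        · rfl
  | 0, 2, 2, _, _, _ => exact (Category.comp_id _).symm
  | 1, 1, 1, _, _, _ => exact (Category.comp_id _).symm
  | 1, 1, 2, _, _, hβ => obtain rfl := hβ rfl rfl rfl
                         exact (Category.id_comp _).symm
  | 1, 2, 2, _, _, _ => exact (Category.comp_id _).symm
  | 2, 2, 2, _, _, _ => exact (Category.comp_id _).symm

/-- The labelling of `Λ(3,3)`: `2` at `{0,1,3}`, `1` at the other elements strictly above `{3}`,
and `0` elsewhere. -/
def hexLabel (x : Finset (Fin 4)) : Fin 3 :=
  if x = {0, 1, 3} then 2 else if 3 ∈ x ∧ x ≠ {3} then 1 else 0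

lemma hexLabel_mono : ∀ x y : Finset (Fin 4), y ≠ Finset.univ → x ⊆ y →
    hexLabel x ≤ hexLabel y := by decide

lemma hexLabel_select : ∀ x y : Finset (Fin 4), x ⊆ y → ∀ z : Finset (Fin 4), y ⊆ z →
    hexLabel x = 1 → hexLabel y = 1 → hexLabel z = 2 →
    decide (0 ∈ x) = decide (0 ∈ y) := by decide

/-- The diagram on `Λ(3,3)` whose extension coequalizes `f` and `g`. -/
def hexFunctor {C : Type u} [Category.{v} C] {X' X Y : C} (s : X' ⟶ X) (f g : X ⟶ Y)
    (e : s ≫ f = s ≫ g) : Lam 3 3 ⥤ C where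
  obj x := labelObj X' X Y (hexLabel x.1.1)
  map {x y} h := labelMap s f g (decide (0 ∈ x.1.1)) _ _
    (hexLabel_mono _ _ y.2.1 (leOfHom h))
  map_id _ := labelMap_id _ _ _ _ _ _
  map_comp h k := labelMap_comp s f g e _ _ _ _ _ _ _
    (hexLabel_select _ _ (leOfHom h) _ (leOfHom k))

/-- The labelling of `Λ(2,0)` by the shape of a span: the elements containing `1` form the left
leg, those containing `2` the right leg, and `{0}` is the apex. -/
def spanLabel (x : Finset (Fin 3)) : Option Limits.WalkingPair :=
  if 1 ∈ x then some .left else if 2 ∈ x then some .right else none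

lemma spanLabel_mono : ∀ x y : Finset (Fin 3), y ≠ Finset.univ → y ≠ Finset.univ \ {0} → x ⊆ y →
    spanLabel x = none ∨ spanLabel x = spanLabel y := by decide

lemma spanLabel_hom (x y : Lam 2 0) (h : x ≤ y) :
    Nonempty (Quiver.Hom (V := Limits.WalkingSpan) (spanLabel x.1.1) (spanLabel y.1.1)) := by
  rcases spanLabel_mono x.1.1 y.1.1 y.2.1 y.2.2 h with e | e
  · rw [e]
    cases spanLabel y.1.1 with
    | none => exact ⟨Limits.WidePushoutShape.Hom.id _⟩
    | some j => exact ⟨Limits.WidePushoutShape.Hom.init j⟩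
  · rw [e]
    exact ⟨Limits.WidePushoutShape.Hom.id _⟩

/-- The functor from `Λ(2,0)` to the shape of a span; the target is a thin category. -/
noncomputable def spanShape : Lam 2 0 ⥤ Limits.WalkingSpan where
  obj x := spanLabel x.1.1
  map {x y} h := (spanLabel_hom x y (leOfHom h)).some
  map_id _ := Subsingleton.elim _ _
  map_comp _ _ := Subsingleton.elim _ _

lemma exists_cocone_of_extension {C : Type u} [Category.{v} C] {n : ℕ} {k : Fin (n+1)}
    (F : Lam n k ⥤ C) (h : ∃ G : PPlus n ⥤ C, lamIncl n k ⋙ G = F) :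
    ∃ (W : C) (c : ∀ x, F.obj x ⟶ W), ∀ (x y : Lam n k) (h : x ⟶ y), F.map h ≫ c y = c x := by
  obtain ⟨G, rfl⟩ := h
  refine ⟨G.obj ⟨Finset.univ, Finset.univ_nonempty⟩,
    fun x => G.map (homOfLE (Finset.subset_univ x.1.1)), fun x y h => ?_⟩
  change G.map _ ≫ G.map _ = _
  rw [← G.map_comp]
  rfl

/-- Build an element of a horn, with the side conditions checked by computation. -/
abbrev mkLam {n : ℕ} {k : Fin (n+1)} (s : Finset (Fin (n+1))) (h₀ : s.Nonempty := by decide)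
    (h : s ≠ Finset.univ ∧ s ≠ Finset.univ \ {k} := by decide) : Lam n k := ⟨⟨s, h₀⟩, h⟩

lemma cf1_of_extension {C : Type u} [Category.{v} C]
    (H : ∀ F : Lam 2 0 ⥤ C, ∃ G : PPlus 2 ⥤ C, lamIncl 2 0 ⋙ G = F)
    {X Y Z : C} (s : X ⟶ Y) (t : X ⟶ Z) :
    ∃ (W : C) (u : Y ⟶ W) (v : Z ⟶ W), s ≫ u = t ≫ v := by
  obtain ⟨W, c, hc⟩ := exists_cocone_of_extension _ (H (spanShape ⋙ Limits.span s t))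
  let a : Lam 2 0 := mkLam {0}
  let b : Lam 2 0 := mkLam {0, 1}
  let d : Lam 2 0 := mkLam {0, 2}
  have hab : a ≤ b := show ({0} : Finset (Fin 3)) ⊆ {0, 1} by decide
  have had : a ≤ d := show ({0} : Finset (Fin 3)) ⊆ {0, 2} by decide
  have e₁ : spanShape.map (homOfLE hab) = Limits.WalkingSpan.Hom.fst := Subsingleton.elim _ _
  have e₂ : spanShape.map (homOfLE had) = Limits.WalkingSpan.Hom.snd := Subsingleton.elim _ _
  have h₁ := hc a b (homOfLE hab)
  have h₂ := hc a d (homOfLE had)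
  rw [Functor.comp_map, e₁] at h₁
  rw [Functor.comp_map, e₂] at h₂
  exact ⟨W, c b, c d, h₁.trans h₂.symm⟩

lemma cf2_of_extension {C : Type u} [Category.{v} C]
    (H : ∀ F : Lam 3 3 ⥤ C, ∃ G : PPlus 3 ⥤ C, lamIncl 3 3 ⋙ G = F)
    {X' X Y : C} (f g : X ⟶ Y) (s : X' ⟶ X) (e : s ≫ f = s ≫ g) :
    ∃ (Y' : C) (t : Y ⟶ Y'), f ≫ t = g ≫ t := by
  obtain ⟨W, c, hc⟩ := exists_cocone_of_extension _ (H (hexFunctor s f g e))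
  let p : Lam 3 3 := mkLam {0, 3}
  let q : Lam 3 3 := mkLam {1, 3}
  let r : Lam 3 3 := mkLam {2, 3}
  let pq : Lam 3 3 := mkLam {0, 1, 3}
  let qr : Lam 3 3 := mkLam {1, 2, 3}
  let pr : Lam 3 3 := mkLam {0, 2, 3}
  have h₁ : f ≫ c pq = c p :=
    hc p pq (homOfLE (show ({0, 3} : Finset (Fin 4)) ⊆ {0, 1, 3} by decide))
  have h₂ : g ≫ c pq = c q :=
    hc q pq (homOfLE (show ({1, 3} : Finset (Fin 4)) ⊆ {0, 1, 3} by decide))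
  have h₃ : 𝟙 X ≫ c qr = c q :=
    hc q qr (homOfLE (show ({1, 3} : Finset (Fin 4)) ⊆ {1, 2, 3} by decide))
  have h₄ : 𝟙 X ≫ c qr = c r :=
    hc r qr (homOfLE (show ({2, 3} : Finset (Fin 4)) ⊆ {1, 2, 3} by decide))
  have h₅ : 𝟙 X ≫ c pr = c r :=
    hc r pr (homOfLE (show ({2, 3} : Finset (Fin 4)) ⊆ {0, 2, 3} by decide))
  have h₆ : 𝟙 X ≫ c pr = c p :=
    hc p pr (homOfLE (show ({0, 3} : Finset (Fin 4)) ⊆ {0, 2, 3} by decide))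
  exact ⟨W, c pq, h₁.trans (h₆.symm.trans (h₅.trans (h₄.symm.trans (h₃.trans h₂.symm))))⟩

/-- A category `C` has a left calculus of fractions if and only if every functor from a
subdivided horn extends to the subdivided simplex; equivalently, `Ex N C` is a Kan complex
iff `C` admits a left calculus of fractions. -/
theorem hasLCF_iff_extension {C : Type*} [Category C] :
    HasLCF C ↔
      ∀ (n : ℕ), 1 ≤ n → ∀ (k : Fin (n+1)) (F : Lam n k ⥤ C),
        ∃ G : PPlus n ⥤ C, lamIncl n k ⋙ G = F := by
  refine ⟨fun hC => lam_extension hC, fun H => ⟨?_, ?_⟩⟩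
  · intro X Y Z s t
    exact cf1_of_extension (H 2 (by decide) 0) s t
  · intro X' X Y f g s e
    exact cf2_of_extension (H 3 (by decide) 3) f g s e
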